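/- Let F be an algebraically closed field of characteristic ≠ 2 and n ≥ 1. Let g ∈ GL_{2n}(F((u))) be such that gᵀ·J̃_{2n}·g = c·J̃_{2n} for some c ∈ F((u))^× and such that g·Λ̃_i = Λ̃_i for all i ∈ ℤ. Then c ∈ F[[u]]^×, and there exists a scalar x ∈ F[[u]]^× such that h = x^{-1}·g satisfies hᵀ·J̃_{2n}·h = J̃_{2n} and h·Λ̃_i = Λ̃_i for all i ∈ ℤ. In other words, I_GSp(F) = F[[u]]^×·I_Sp(F), where I_GSp(F) (resp. I_Sp(F)) denotes the group of symplectic similitudes (resp. symplectic matrices) in GL_{2n}(F((u))) stabilizing each member of the standard lattice chain. -/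

import Mathlib

noncomputable section
namespace Pap

variable (R : Type*) [CommRing R]

/-- `u^m` as a Laurent series. -/
def U (m : ℤ) : LaurentSeries R := HahnSeries.single m 1

/-- `R[[u]]` as a `R[[u]]`-submodule of `R((u))`. -/
def psRange : Submodule (PowerSeries R) (LaurentSeries R) :=
  LinearMap.range (Algebra.linearMap (PowerSeries R) (LaurentSeries R))

variable (n : ℕ)

/-- `R((u))^n`. -/
abbrev V := Fin n → LaurentSeries R

instance (priority := 10000) : AddCommGroup (V R n) := Pi.addCommGroup
instance (priority := 10000) : Module (PowerSeries R) (V R n) := Pi.module _ _ _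
instance (priority := 10000) : Module (LaurentSeries R) (V R n) := Pi.module _ _ _

/-- Multiplication by a Laurent series, as an `R[[u]]`-linear endomorphism of `R((u))^n`. -/
def smulV (a : LaurentSeries R) : V R n →ₗ[PowerSeries R] V R n where
  toFun x := a • x
  map_add' x y := smul_add a x y
  map_smul' c x := by
    funext i
    change a * (c • x i) = c • (a * x i)
    simp only [Algebra.smul_def]
    ring

/-- Image of a submodule under multiplication by a Laurent series. -/
def scaleL (a : LaurentSeries R) (L : Submodule (PowerSeries R) (V R n)) :
    Submodule (PowerSeries R) (V R n) := L.map (smulV R n a)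

/-- The standard lattice `R[[u]]^n`. -/
def stdLat : Submodule (PowerSeries R) (V R n) := Submodule.pi Set.univ fun _ => psRange R

/-- The quotient `B/(A ∩ B)`; for `A ≤ B` this is `B/A`. -/
abbrev subQuot (A B : Submodule (PowerSeries R) (V R n)) :=
  B ⧸ (A.comap B.subtype)

/-- A lattice in `R((u))^n`. -/
def IsLattice (L : Submodule (PowerSeries R) (V R n)) : Prop :=
  ∃ N : ℕ, scaleL R n (U R N) (stdLat R n) ≤ L ∧ L ≤ scaleL R n (U R (-(N : ℤ))) (stdLat R n) ∧
    Module.Finite R (RestrictScalars R (PowerSeries R)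
      (subQuot R n L (scaleL R n (U R (-(N : ℤ))) (stdLat R n)))) ∧
    Module.Projective R (RestrictScalars R (PowerSeries R)
      (subQuot R n L (scaleL R n (U R (-(N : ℤ))) (stdLat R n))))

/-- Rank one finite locally free module. -/
def RankOne (A : Type*) [CommRing A] (Q : Type*) [AddCommGroup Q] [Module A Q] : Prop :=
  Module.Finite A Q ∧ Module.Projective A Q ∧
    ∀ (P : Ideal A) [P.IsPrime],
      Module.finrank (Localization P.primeCompl) (LocalizedModule P.primeCompl Q) = 1

/-- Exponent of `u` bounding the `t`-th coordinate of the `j`-th standard lattice. -/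
def dex (j : ℤ) (t : Fin n) : ℤ := (j - ((t : ℤ) + 1)) / n + 1

/-- The standard lattice chain `Λ̃_j`, `j ∈ ℤ`. -/
def stdChain (j : ℤ) : Submodule (PowerSeries R) (V R n) :=
  Submodule.span (PowerSeries R)
    (Set.range fun t : Fin n =>
      (fun s => if s = t then U R (-(dex n j t)) else 0 : V R n))

/-- A complete periodic lattice chain in `R((u))^n`. -/
def IsLatticeChain (L : ℤ → Submodule (PowerSeries R) (V R n)) : Prop :=
  (∀ i, IsLattice R n (L i)) ∧ (∀ i, L i ≤ L (i + 1)) ∧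
    (∀ i, @RankOne R _ (RestrictScalars R (PowerSeries R) (subQuot R n (L i) (L (i + 1)))) _
      (RestrictScalars.module R (PowerSeries R) (subQuot R n (L i) (L (i + 1))) :)) ∧
    (∀ i, L ((n : ℤ) + i) = scaleL R n (U R (-1)) (L i))

/-- The action of an invertible matrix over `R((u))` on `R[[u]]`-submodules of `R((u))^n`. -/
def glLat (g : GL (Fin n) (LaurentSeries R)) (L : Submodule (PowerSeries R) (V R n)) :
    Submodule (PowerSeries R) (V R n) :=
  L.map ((Matrix.mulVecLin (g : Matrix (Fin n) (Fin n) (LaurentSeries R))).restrictScalars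
    (PowerSeries R))

/-- The symplectic matrix `J̃_{2n}`. -/
def Jt : Matrix (Fin (2 * n)) (Fin (2 * n)) (LaurentSeries R) :=
  Matrix.of fun i j =>
    if (i : ℕ) + (j : ℕ) = 2 * n - 1 then (if (i : ℕ) < n then 1 else -1) else 0

/-- The image of an `R[[u]]`-submodule of `R((u))^n` under a matrix over `R((u))`. -/
def matLat (x : Matrix (Fin n) (Fin n) (LaurentSeries R))
    (L : Submodule (PowerSeries R) (V R n)) : Submodule (PowerSeries R) (V R n) :=
  L.map ((Matrix.mulVecLin x).restrictScalars (PowerSeries R))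

end Pap
end


namespace Pap

theorem ps_mul {F : Type*} [Field F] {a b : LaurentSeries F} (ha : a ∈ psRange F)
    (hb : b ∈ psRange F) : a * b ∈ psRange F := by
  obtain ⟨p, rfl⟩ := ha
  obtain ⟨q, rfl⟩ := hb
  exact ⟨p * q, by simp⟩

theorem ps_one {F : Type*} [Field F] : (1 : LaurentSeries F) ∈ psRange F := ⟨1, by simp⟩

theorem chain_zero (F : Type*) [Field F] (m : ℕ) :
    stdChain F m 0 = Submodule.span (PowerSeries F)
      (Set.range fun t : Fin m => (Pi.single t 1 : V F m)) := by
  unfold stdChain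
  congr 2
  funext t
  have h : dex m 0 t = 0 := by
    unfold dex
    have : (0 - ((t : ℤ) + 1)) / (m : ℤ) = -1 := by
      have := t.2
      rw [Int.ediv_eq_iff_of_pos (by omega)]
      constructor <;> omega
    omega
  funext s
  simp only [h, U, Pi.single_apply]
  rfl

theorem mem_chain_zero {F : Type*} [Field F] {m : ℕ} {v : V F m} (hv : v ∈ stdChain F m 0)
    (s : Fin m) : v s ∈ psRange F := by
  rw [chain_zero] at hv
  induction hv using Submodule.span_induction with
  | mem x h =>
    obtain ⟨t, rfl⟩ := h
    by_cases hst : s = t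
    · subst hst; simpa using ps_one
    · simp [hst]
  | zero => exact Submodule.zero_mem _
  | add x y _ _ hx hy => exact Submodule.add_mem _ hx hy
  | smul a x _ hx => exact Submodule.smul_mem _ a hx

theorem single_mem (F : Type*) [Field F] (m : ℕ) (t : Fin m) :
    (Pi.single t 1 : V F m) ∈ stdChain F m 0 := by
  rw [chain_zero]
  exact Submodule.subset_span ⟨t, rfl⟩

theorem sim_ps {F : Type*} [Field F] {n : ℕ} (hn : 1 ≤ n)
    (A : Matrix (Fin (2 * n)) (Fin (2 * n)) (LaurentSeries F)) (hA : ∀ i j, A i j ∈ psRange F)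
    (c : LaurentSeries F) (h : A.transpose * Jt F n * A = c • Jt F n) : c ∈ psRange F := by
  have hJ : ∀ i j, Jt F n i j ∈ psRange F := by
    intro i j
    simp only [Jt, Matrix.of_apply]
    split_ifs
    · exact ps_one
    · exact Submodule.neg_mem _ ps_one
    · exact Submodule.zero_mem _
  have h1 := congrFun (congrFun h ⟨0, by omega⟩) ⟨2 * n - 1, by omega⟩
  have h2 : Jt F n ⟨0, by omega⟩ ⟨2 * n - 1, by omega⟩ = 1 := by
    simp [Jt]; omega
  rw [Matrix.smul_apply, h2, smul_eq_mul, mul_one] at h1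
  rw [← h1]
  simp only [Matrix.mul_apply, Matrix.transpose_apply]
  refine Submodule.sum_mem _ fun i _ => ps_mul (Submodule.sum_mem _ fun j _ => ?_) (hA _ _)
  exact ps_mul (hA _ _) (hJ _ _)

def sqc {F : Type*} [Field F] (d : ℕ → F) (s : F) : ℕ → F
  | 0 => s
  | k + 1 => (d (k + 1) - ∑ i : Fin k, sqc d s (i + 1) * sqc d s (k - i)) / (2 * s)
decreasing_by all_goals omega

theorem exists_sq {F : Type*} [Field F] [IsAlgClosed F] (hchar : (2 : F) ≠ 0)
    (d : PowerSeries F) (hd : PowerSeries.constantCoeff d ≠ 0) :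
    ∃ y : PowerSeries F, y * y = d := by
  obtain ⟨s, hs⟩ := IsAlgClosed.exists_pow_nat_eq (PowerSeries.constantCoeff d) (n := 2) (by simp)
  have hs0 : s ≠ 0 := by
    rintro rfl
    apply hd
    rw [← hs]; simp
  refine ⟨PowerSeries.mk (sqc (fun k => PowerSeries.coeff k d) s), ?_⟩
  ext k
  rw [PowerSeries.coeff_mul]
  simp only [PowerSeries.coeff_mk]
  rw [Finset.Nat.sum_antidiagonal_eq_sum_range_succ
    (fun i j => sqc (fun k => PowerSeries.coeff k d) s i * sqc (fun k => PowerSeries.coeff k d) s j)]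
  cases k with
  | zero =>
    simp [sqc, ← hs, pow_two]
  | succ k =>
    rw [Finset.sum_range_succ, Finset.sum_range_succ']
    have e : ∑ i ∈ Finset.range k, sqc (fun k => PowerSeries.coeff k d) s (i + 1) *
        sqc (fun k => PowerSeries.coeff k d) s (k + 1 - (i + 1)) =
        ∑ i : Fin k, sqc (fun k => PowerSeries.coeff k d) s (i + 1) *
        sqc (fun k => PowerSeries.coeff k d) s (k - i) := by
      rw [Finset.sum_range]
      simp
    have e2 : sqc (fun k => PowerSeries.coeff k d) s (k + 1) = (PowerSeries.coeff (k + 1) d -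
        ∑ i : Fin k, sqc (fun k => PowerSeries.coeff k d) s (i + 1) *
        sqc (fun k => PowerSeries.coeff k d) s (k - i)) / (2 * s) := by
      rw [sqc]
    have e0 : sqc (fun k => PowerSeries.coeff k d) s 0 = s := by rw [sqc]
    rw [e, Nat.sub_self, Nat.sub_zero, e0]
    generalize (∑ i : Fin k, sqc (fun k => PowerSeries.coeff k d) s (i + 1) *
        sqc (fun k => PowerSeries.coeff k d) s (k - i)) = S at *
    rw [e2]
    field_simp
    ring

theorem exists_unit_sq {F : Type*} [Field F] [IsAlgClosed F] (hchar : (2 : F) ≠ 0)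
    (c : (LaurentSeries F)ˣ) (hc : (c : LaurentSeries F) ∈ psRange F)
    (hc' : ((c⁻¹ : (LaurentSeries F)ˣ) : LaurentSeries F) ∈ psRange F) :
    ∃ x : (LaurentSeries F)ˣ, (x : LaurentSeries F) * x = c ∧ (x : LaurentSeries F) ∈ psRange F ∧
      ((x⁻¹ : (LaurentSeries F)ˣ) : LaurentSeries F) ∈ psRange F := by
  obtain ⟨p, hp⟩ := id hc
  obtain ⟨q, hq⟩ := id hc'
  rw [Algebra.linearMap_apply] at hp hq
  have hpq : p * q = 1 := by
    apply FaithfulSMul.algebraMap_injective (PowerSeries F) (LaurentSeries F)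
    rw [map_mul, hp, hq, map_one, Units.mul_inv]
  have hd : PowerSeries.constantCoeff p ≠ 0 := by
    intro h0
    have := congrArg PowerSeries.constantCoeff hpq
    simp [h0] at this
  obtain ⟨y, hy⟩ := exists_sq hchar p hd
  have h1 : algebraMap (PowerSeries F) (LaurentSeries F) y * algebraMap _ _ (y * q) = 1 := by
    rw [← map_mul, ← mul_assoc, hy, hpq, map_one]
  refine ⟨⟨algebraMap _ _ y, algebraMap _ _ (y * q), h1, by rw [mul_comm]; exact h1⟩, ?_, ?_, ?_⟩
  · change algebraMap _ _ y * algebraMap _ _ y = _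
    rw [← map_mul, hy, hp]
  · exact ⟨y, rfl⟩
  · exact ⟨y * q, rfl⟩

theorem scale_eq {F : Type*} [Field F] {m : ℕ} (x : (LaurentSeries F)ˣ)
    (hx : (x : LaurentSeries F) ∈ psRange F)
    (hx' : ((x⁻¹ : (LaurentSeries F)ˣ) : LaurentSeries F) ∈ psRange F)
    (g : Matrix (Fin m) (Fin m) (LaurentSeries F)) (L : Submodule (PowerSeries F) (V F m))
    (hL : matLat F m g L = L) :
    matLat F m (((x⁻¹ : (LaurentSeries F)ˣ) : LaurentSeries F) • g) L = L := by
  obtain ⟨p, hp⟩ := hx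
  obtain ⟨q, hq⟩ := hx'
  rw [Algebra.linearMap_apply] at hp hq
  have hs : ∀ (r : PowerSeries F) (v : V F m),
      algebraMap (PowerSeries F) (LaurentSeries F) r • v = r • v := by
    intro r v
    funext i
    change algebraMap (PowerSeries F) (LaurentSeries F) r * v i = r • v i
    rw [Algebra.smul_def]
  have key : ∀ v : V F m, (((x⁻¹ : (LaurentSeries F)ˣ) : LaurentSeries F) • g).mulVec v
      = q • g.mulVec v := by
    intro v
    rw [Matrix.smul_mulVec, ← hq, hs]
  apply le_antisymm
  · rintro _ ⟨v, hv, rfl⟩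
    change (((x⁻¹ : (LaurentSeries F)ˣ) : LaurentSeries F) • g).mulVec v ∈ L
    rw [key]
    apply Submodule.smul_mem
    rw [← hL]
    exact ⟨v, hv, rfl⟩
  · intro w hw
    rw [← hL] at hw
    obtain ⟨v, hv, rfl⟩ := hw
    refine ⟨p • v, Submodule.smul_mem _ _ hv, ?_⟩
    change (((x⁻¹ : (LaurentSeries F)ˣ) : LaurentSeries F) • g).mulVec (p • v) = g.mulVec v
    rw [← hs p v, hp, Matrix.smul_mulVec, Matrix.mulVec_smul, smul_smul, Units.inv_mul, one_smul]

end Pap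

open Pap Matrix in
/-- `I_GSp(F) = F[[u]]^× · I_Sp(F)`: a symplectic similitude stabilizing the standard chain has
similitude factor in `F[[u]]^×` and is a `F[[u]]^×`-multiple of a symplectic matrix stabilizing
the standard chain. -/
theorem stmt9 (F : Type*) [Field F] [IsAlgClosed F] (hchar : (2 : F) ≠ 0)
    (n : ℕ) (hn : 1 ≤ n) (g : GL (Fin (2 * n)) (LaurentSeries F)) (c : (LaurentSeries F)ˣ)
    (hc : (g : Matrix (Fin (2 * n)) (Fin (2 * n)) (LaurentSeries F))ᵀ * Jt F n *
        (g : Matrix (Fin (2 * n)) (Fin (2 * n)) (LaurentSeries F))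
      = (c : LaurentSeries F) • Jt F n)
    (hstab : ∀ i : ℤ, glLat F (2 * n) g (stdChain F (2 * n) i) = stdChain F (2 * n) i) :
    ((c : LaurentSeries F) ∈ psRange F ∧
      ((c⁻¹ : (LaurentSeries F)ˣ) : LaurentSeries F) ∈ psRange F) ∧
    ∃ x : (LaurentSeries F)ˣ,
      ((x : LaurentSeries F) ∈ psRange F ∧
        ((x⁻¹ : (LaurentSeries F)ˣ) : LaurentSeries F) ∈ psRange F) ∧
      (((x⁻¹ : (LaurentSeries F)ˣ) : LaurentSeries F) •
            (g : Matrix (Fin (2 * n)) (Fin (2 * n)) (LaurentSeries F)))ᵀ * Jt F n *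
          (((x⁻¹ : (LaurentSeries F)ˣ) : LaurentSeries F) •
            (g : Matrix (Fin (2 * n)) (Fin (2 * n)) (LaurentSeries F)))
        = Jt F n ∧
      ∀ i : ℤ,
        matLat F (2 * n)
          (((x⁻¹ : (LaurentSeries F)ˣ) : LaurentSeries F) •
            (g : Matrix (Fin (2 * n)) (Fin (2 * n)) (LaurentSeries F)))
          (stdChain F (2 * n) i) = stdChain F (2 * n) i := by
  have hg : ∀ i j, (g : Matrix (Fin (2 * n)) (Fin (2 * n)) (LaurentSeries F)) i j ∈ psRange F := by
    intro i j
    have h : (g : Matrix (Fin (2 * n)) (Fin (2 * n)) (LaurentSeries F)).mulVec (Pi.single j 1) ∈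
        stdChain F (2 * n) 0 := by
      rw [← hstab 0]
      exact ⟨_, single_mem F (2 * n) j, rfl⟩
    have := mem_chain_zero h i
    simpa using this
  have hg' : ∀ i j, ((g⁻¹ : GL (Fin (2 * n)) (LaurentSeries F)) :
      Matrix (Fin (2 * n)) (Fin (2 * n)) (LaurentSeries F)) i j ∈ psRange F := by
    intro i j
    have h := single_mem F (2 * n) j
    rw [← hstab 0] at h
    obtain ⟨v, hv, hvj⟩ := h
    change (g : Matrix (Fin (2 * n)) (Fin (2 * n)) (LaurentSeries F)).mulVec v = _ at hvj
    have h2 : ((g⁻¹ : GL (Fin (2 * n)) (LaurentSeries F)) :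
      Matrix (Fin (2 * n)) (Fin (2 * n)) (LaurentSeries F)).mulVec (Pi.single j 1) = v := by
      rw [← hvj, Matrix.mulVec_mulVec, Units.inv_mul, Matrix.one_mulVec]
    have := mem_chain_zero hv i
    rw [← h2] at this
    simpa only [Matrix.mulVec_single_one, Matrix.col_apply] using this
  have hc1 := sim_ps hn _ hg _ hc
  have hc2 : ((c⁻¹ : (LaurentSeries F)ˣ) : LaurentSeries F) ∈ psRange F := by
    refine sim_ps hn _ hg' _ ?_
    have hJ : Jt F n = ((c⁻¹ : (LaurentSeries F)ˣ) : LaurentSeries F) •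
        ((g : Matrix (Fin (2 * n)) (Fin (2 * n)) (LaurentSeries F))ᵀ * Jt F n *
        (g : Matrix (Fin (2 * n)) (Fin (2 * n)) (LaurentSeries F))) := by
      rw [hc, smul_smul, Units.inv_mul, one_smul]
    have hgg : (g : Matrix (Fin (2 * n)) (Fin (2 * n)) (LaurentSeries F)) *
      ((g⁻¹ : GL (Fin (2 * n)) (LaurentSeries F)) :
      Matrix (Fin (2 * n)) (Fin (2 * n)) (LaurentSeries F)) = 1 := Units.mul_inv g
    have hgt := congrArg Matrix.transpose hgg
    rw [Matrix.transpose_mul, Matrix.transpose_one] at hgt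
    conv_lhs => rw [hJ]
    rw [Matrix.mul_smul, Matrix.smul_mul]
    congr 1
    rw [Matrix.mul_assoc, Matrix.mul_assoc, Matrix.mul_assoc, hgg, Matrix.mul_one,
      ← Matrix.mul_assoc, hgt, Matrix.one_mul]
  refine ⟨⟨hc1, hc2⟩, ?_⟩
  obtain ⟨x, hxx, hx, hx'⟩ := exists_unit_sq hchar c hc1 hc2
  refine ⟨x, ⟨hx, hx'⟩, ?_, fun i => scale_eq x hx hx' _ _ (hstab i)⟩
  rw [Matrix.transpose_smul, Matrix.smul_mul, Matrix.smul_mul, Matrix.mul_smul, hc, ← hxx,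
    smul_smul, smul_smul]
  have : ((x⁻¹ : (LaurentSeries F)ˣ) : LaurentSeries F) *
      (((x⁻¹ : (LaurentSeries F)ˣ) : LaurentSeries F) * ((x : LaurentSeries F) * x)) = 1 := by
    rw [Units.inv_mul_cancel_left, Units.inv_mul]
  first
    | rw [this, one_smul]
    | rw [mul_assoc, this, one_smul]
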